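/- Let Φ be of type B_n, C_n, or D_n and let λ be an integral Φ_I-regular weight with Φ_{λ̄} = Φ_J. If λ is separable relative to the pair (S, S̄), then every μ ∈ ^IW^Jλ̄ is separable relative to (S, S̄). -/

import Mathlib

namespace JantzenBlocks

open scoped Classical

/-- The three classical types `B`, `C`, `D`. -/
inductive CType : Type
  | B | C | D
deriving DecidableEq

/-- The weight space `ℝ^n`. -/
abbrev V (n : ℕ) := Fin n → ℝ

noncomputable section

/-- The standard inner product on `ℝ^n`. -/
def inn {n : ℕ} (x y : V n) : ℝ := ∑ i, x i * y i

/-- The standard basis vector `e i`. -/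
def ee {n : ℕ} (i : Fin n) : V n := Pi.single i 1

/-- The reflection `s_v` in the vector `v`. -/
def sRefl {n : ℕ} (v x : V n) : V n := x - (2 * inn x v / inn v v) • v

/-- The roots `±e_i ± e_j` (`i ≠ j`), i.e. the root system of type `D_n`. -/
def DRoots (n : ℕ) : Set (V n) :=
  {v | ∃ i j : Fin n, i ≠ j ∧ (v = ee i + ee j ∨ v = ee i - ee j ∨ v = -ee i - ee j)}

/-- The ambient root system `Φ` of type `B_n`, `C_n` or `D_n`. -/
def Phi (n : ℕ) : CType → Set (V n)
  | CType.B => DRoots n ∪ {v | ∃ i : Fin n, v = ee i ∨ v = -ee i}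
  | CType.C => DRoots n ∪ {v | ∃ i : Fin n, v = (2:ℝ) • ee i ∨ v = -((2:ℝ) • ee i)}
  | CType.D => DRoots n

/-- The standard positive system `Φ⁺`: roots whose first nonzero coordinate is positive. -/
def PhiPos (n : ℕ) (ct : CType) : Set (V n) :=
  {v | v ∈ Phi n ct ∧ ∃ i : Fin n, 0 < v i ∧ ∀ j : Fin n, j < i → v j = 0}

/-- The simple root `α_{i+1}` (`0`-based index `i`). -/
def alphaR (n : ℕ) (ct : CType) (i : Fin n) : V n :=
  if h : i.1 + 1 < n then ee i - ee ⟨i.1 + 1, h⟩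
  else
    match ct with
    | CType.B => ee i
    | CType.C => (2:ℝ) • ee i
    | CType.D => ee ⟨n - 2, Nat.sub_lt i.pos (by norm_num)⟩ + ee i

/-- The subsystem `Φ_I` generated by the simple roots indexed by `I`. -/
def PhiI (n : ℕ) (ct : CType) (I : Finset (Fin n)) : Set (V n) :=
  Phi n ct ∩ (Submodule.span ℝ (alphaR n ct '' (I : Set (Fin n))) : Set (V n))

/-- `λ` is `Φ_I`-regular. -/
def RegI (n : ℕ) (ct : CType) (I : Finset (Fin n)) (lam : V n) : Prop :=
  ∀ β ∈ PhiI n ct I, inn lam β ≠ 0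

/-- `λ` is integral. -/
def IntegralW (n : ℕ) (ct : CType) (lam : V n) : Prop :=
  ∀ β ∈ Phi n ct, ∃ k : ℤ, 2 * inn lam β / inn β β = (k : ℝ)

/-- `λ` is dominant. -/
def DominantW (n : ℕ) (ct : CType) (lam : V n) : Prop :=
  ∀ i : Fin n, 0 ≤ inn lam (alphaR n ct i)

/-- `μ` lies in the `W_I`-orbit of `λ` (`W_I` generated by the reflections `s_α`, `α ∈ I`). -/
def WIOrb (n : ℕ) (ct : CType) (I : Finset (Fin n)) : V n → V n → Prop :=
  Relation.ReflTransGen (fun x y => ∃ i ∈ I, y = sRefl (alphaR n ct i) x)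

/-- `μ` lies in the `W`-orbit of `λ`. -/
def WOrb (n : ℕ) (ct : CType) : V n → V n → Prop := WIOrb n ct Finset.univ

/-- `λ ∈ Λ_I⁺`. -/
def LamIPlus (n : ℕ) (ct : CType) (I : Finset (Fin n)) (lam : V n) : Prop :=
  IntegralW n ct lam ∧ ∀ i ∈ I, 0 < inn lam (alphaR n ct i)

/-- The sorted list `q_1 < q_2 < … < q_{m-1}` (`1`-based values) of indices of `Δ∖I`. -/
def Qlist (n : ℕ) (I : Finset (Fin n)) : List ℕ :=
  ((Finset.univ \ I).sort (· ≤ ·)).map (fun j => j.1 + 1)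

/-- The number `m` of segments determined by `I`. -/
def mval (n : ℕ) (I : Finset (Fin n)) : ℕ := (Qlist n I).length + 1

/-- `q_s`, with the conventions `q_0 = 0` and `q_m = n`. -/
def qval (n : ℕ) (I : Finset (Fin n)) (s : ℕ) : ℕ :=
  if s = 0 then 0 else if s < mval n I then (Qlist n I).getD (s - 1) 0 else n

/-- `I` is standard (automatic in types `B`, `C`). -/
def StandardI (n : ℕ) (ct : CType) (I : Finset (Fin n)) : Prop :=
  ct = CType.D → ∀ h : 2 ≤ n,
    ((⟨n - 2, by omega⟩ : Fin n) ∈ I ∨ (⟨n - 1, by omega⟩ : Fin n) ∉ I)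

/-- `q_s`, corrected for nonstandard `I` (where `q_{m-1}` is replaced by `n`,
so that the `(m-1)`-st segment is `(q_{m-2}, n]` and the `m`-th segment is empty). -/
def qv (n : ℕ) (ct : CType) (I : Finset (Fin n)) (s : ℕ) : ℕ :=
  if ¬ StandardI n ct I ∧ s = mval n I - 1 then n else qval n I s

/-- The segment length `n_s`. -/
def nsval (n : ℕ) (ct : CType) (I : Finset (Fin n)) (s : ℕ) : ℕ :=
  qv n ct I s - qv n ct I (s - 1)

/-- The (`0`-based) index `i` lies in the `s`-th segment, i.e. `q_{s-1} < i+1 ≤ q_s`. -/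
def InSeg (n : ℕ) (ct : CType) (I : Finset (Fin n)) (s : ℕ) (i : Fin n) : Prop :=
  qv n ct I (s - 1) < i.1 + 1 ∧ i.1 + 1 ≤ qv n ct I s

/-- `n_s^λ(a)`: the number of entries of the `s`-th segment of `λ` with absolute value `a`. -/
def nsl (n : ℕ) (ct : CType) (I : Finset (Fin n)) (lam : V n) (s : ℕ) (a : ℝ) : ℕ :=
  (Finset.univ.filter (fun i : Fin n => InSeg n ct I s i ∧ |lam i| = a)).card

/-- `a_t = λ̄_{q̄_t}` for `1 ≤ t < m̄`, and `a_{m̄} = 0`. -/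
def aval (n : ℕ) (ct : CType) (J : Finset (Fin n)) (lbar : V n) (t : ℕ) : ℝ :=
  if t < mval n J then
    (if h : qv n ct J t - 1 < n then lbar ⟨qv n ct J t - 1, h⟩ else 0)
  else 0

/-- `n_s^λ(a)` is maximal among all `Φ_I`-regular weights in the orbit of `λ`. -/
def IsMaxN (n : ℕ) (ct : CType) (I : Finset (Fin n)) (lam : V n) (s : ℕ) (a : ℝ) : Prop :=
  ∀ mu : V n, WOrb n ct lam mu → RegI n ct I mu →
    nsl n ct I mu s a ≤ nsl n ct I lam s a

/-- The exceptional configurations of Proposition 4.7 (types `B` and `C`, with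
`shortR i` the short/long root `e_i` resp. `2e_i`). -/
def ExcBC (n : ℕ) (ct : CType) (I : Finset (Fin n)) (shortR : Fin n → V n)
    (lam β : V n) : Prop :=
  ∃ s : ℕ, 1 ≤ s ∧ s < mval n I ∧ ∃ a : ℝ, 0 < a ∧
    nsl n ct I lam s a = 1 ∧
    nsl n ct I lam s 0 + nsl n ct I lam (mval n I) a = 1 ∧
    ((∃ i j : Fin n, InSeg n ct I s i ∧ InSeg n ct I s j ∧
        |lam i| = a ∧ lam j = 0 ∧ (β = shortR i ∨ β = ee i + ee j)) ∨
     (∃ i j : Fin n, InSeg n ct I s i ∧ InSeg n ct I (mval n I) j ∧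
        ((lam i = a ∧ lam j = a) ∨ (lam i = -a ∧ lam j = -a)) ∧
        (β = shortR i ∨ β = ee i + ee j)) ∨
     (∃ i j : Fin n, InSeg n ct I s i ∧ InSeg n ct I (mval n I) j ∧
        ((lam i = a ∧ lam j = -a) ∨ (lam i = -a ∧ lam j = a)) ∧
        (β = shortR i ∨ β = ee i - ee j)))

/-- The exceptional configurations of Proposition 4.7 (type `D`). -/
def ExcD (n : ℕ) (I : Finset (Fin n)) (lam β : V n) : Prop :=
  ∃ s : ℕ, 1 ≤ s ∧ s < mval n I ∧ ∃ a : ℝ, 0 < a ∧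
    nsl n CType.D I lam s a = 1 ∧ nsl n CType.D I lam (mval n I) a = 1 ∧
    nsl n CType.D I lam s 0 = 1 ∧ nsl n CType.D I lam (mval n I) 0 = 1 ∧
    ∃ i j k l : Fin n, InSeg n CType.D I s i ∧ InSeg n CType.D I s j ∧
      InSeg n CType.D I (mval n I) k ∧ InSeg n CType.D I (mval n I) l ∧
      lam j = 0 ∧ lam l = 0 ∧
      ((((lam i = a ∧ lam k = a) ∨ (lam i = -a ∧ lam k = -a)) ∧
          (β = ee i + ee j ∨ β = ee i + ee k)) ∨
       (((lam i = a ∧ lam k = -a) ∨ (lam i = -a ∧ lam k = a)) ∧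
          (β = ee i + ee j ∨ β = ee i - ee k)))

/-- The exceptional configurations in which `β` fails to be a linked root. -/
def Exc (n : ℕ) (ct : CType) (I : Finset (Fin n)) (lam β : V n) : Prop :=
  match ct with
  | CType.B => ExcBC n CType.B I (fun i => ee i) lam β
  | CType.C => ExcBC n CType.C I (fun i => (2:ℝ) • ee i) lam β
  | CType.D => ExcD n I lam β

/-- `β` is a linked root of the `Φ_I`-regular weight `λ` (for standard `I`). -/
def PlainLinked (n : ℕ) (ct : CType) (I : Finset (Fin n)) (lam β : V n) : Prop :=
  RegI n ct I lam ∧ β ∈ PhiPos n ct ∧ β ∉ PhiI n ct I ∧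
  RegI n ct I (sRefl β lam) ∧ sRefl β lam ≠ lam ∧ ¬ Exc n ct I lam β

/-- The transposition of the last two indices. -/
def swapLast (n : ℕ) (j : Fin n) : Fin n :=
  if j.1 = n - 1 then ⟨n - 2, Nat.sub_lt j.pos (by norm_num)⟩
  else if j.1 = n - 2 then ⟨n - 1, Nat.sub_lt j.pos (by norm_num)⟩
  else j

/-- The isomorphism `φ = s_{e_n}` (negating the last coordinate). -/
def phiW {n : ℕ} (x : V n) : V n := fun j => if j.1 = n - 1 then -x j else x j

/-- The image `φ(I)` of an index set under `φ` (interchanging `α_{n-1}` and `α_n`). -/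
def phiIdx (n : ℕ) (I : Finset (Fin n)) : Finset (Fin n) := I.image (swapLast n)

/-- `β` is a linked root of `λ`; for nonstandard `I` the notion is transported along `φ`. -/
def LinkedRoot (n : ℕ) (ct : CType) (I : Finset (Fin n)) (lam β : V n) : Prop :=
  if StandardI n ct I then PlainLinked n ct I lam β
  else PlainLinked n ct (phiIdx n I) (phiW lam) (phiW β)

/-- One step in a connecting chain: `y ∈ W_I x`, or `y = w s_β x` for a linked root `β` of `x`. -/
def ConnStep (n : ℕ) (ct : CType) (I : Finset (Fin n)) (x y : V n) : Prop :=
  RegI n ct I x ∧ RegI n ct I y ∧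
  (WIOrb n ct I x y ∨ ∃ β : V n, LinkedRoot n ct I x β ∧ WIOrb n ct I (sRefl β x) y)

/-- `λ ⟷ μ`: `λ` and `μ` are connected by a chain of linked roots. -/
def Conn (n : ℕ) (ct : CType) (I : Finset (Fin n)) (lam mu : V n) : Prop :=
  RegI n ct I lam ∧ RegI n ct I mu ∧
  Relation.ReflTransGen (ConnStep n ct I) lam mu

/-- The set `^IW^Jλ̄ = Wλ̄ ∩ Λ_I⁺` of weights parametrizing the simple modules. -/
def IWJset (n : ℕ) (ct : CType) (I : Finset (Fin n)) (lbar : V n) : Set (V n) :=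
  {mu | WOrb n ct lbar mu ∧ LamIPlus n ct I mu}

/-- `(S, S̄)` is a separable pair for the weight `λ`. -/
def IsSepPair (n : ℕ) (ct : CType) (I J : Finset (Fin n)) (lbar lam : V n)
    (S Sb : Finset ℕ) : Prop :=
  S.Nonempty ∧ Sb.Nonempty ∧
  S ⊆ Finset.Icc 1 (mval n I) ∧ Sb ⊆ Finset.Icc 1 (mval n J) ∧
  1 < mval n I ∧ 1 < mval n J ∧
  (∀ s ∈ S, ∀ t ∈ Sb, IsMaxN n ct I lam s (aval n ct J lbar t)) ∧
  (∀ s ∈ Finset.Icc 1 (mval n I), s ∉ S →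
     ∀ t ∈ Finset.Icc 1 (mval n J), t ∉ Sb →
       nsl n ct I lam s (aval n ct J lbar t) = 0) ∧
  (match ct with
   | CType.B => (mval n I ∈ S ↔ mval n J ∉ Sb)
   | CType.C => (mval n I ∈ S ↔ mval n J ∉ Sb)
   | CType.D => (mval n I ∈ S ↔ mval n J ∈ Sb))

/-- `𝒟`: the set of separable pairs of the system `(Φ, Φ_I, Φ_J)`. -/
def DSet (n : ℕ) (ct : CType) (I J : Finset (Fin n)) (lbar : V n) :
    Set (Finset ℕ × Finset ℕ) :=
  {p | ∀ lam ∈ IWJset n ct I lbar, IsSepPair n ct I J lbar lam p.1 p.2}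

/-- The four weakly separable pairs. -/
def IsWeakPair (n : ℕ) (I J : Finset (Fin n)) (p : Finset ℕ × Finset ℕ) : Prop :=
  p = (Finset.Icc 1 (mval n I - 1), {mval n J}) ∨
  p = (Finset.Icc 1 (mval n I), {mval n J}) ∨
  p = ({mval n I}, Finset.Icc 1 (mval n J - 1)) ∨
  p = ({mval n I}, Finset.Icc 1 (mval n J))

/-- The system `(Φ, Φ_I, Φ_J)` is separable. -/
def SepSys (n : ℕ) (ct : CType) (I J : Finset (Fin n)) (lbar : V n) : Prop :=
  (DSet n ct I J lbar).Nonempty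

/-- The system `(Φ, Φ_I, Φ_J)` is strongly separable. -/
def StronglySepSys (n : ℕ) (ct : CType) (I J : Finset (Fin n)) (lbar : V n) : Prop :=
  ∃ p ∈ DSet n ct I J lbar, ¬ IsWeakPair n I J p

/-- The system `(Φ, Φ_I, Φ_J)` is weakly separable. -/
def WeaklySepSys (n : ℕ) (ct : CType) (I J : Finset (Fin n)) (lbar : V n) : Prop :=
  SepSys n ct I J lbar ∧ ∀ p ∈ DSet n ct I J lbar, IsWeakPair n I J p

/-- The partial ordering on separable pairs: `(S₁,S̄₁) ≤ (S₂,S̄₂)` iff `S₁ ⊆ S₂`, `S̄₁ ⊇ S̄₂`. -/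
def pairLE (p q : Finset ℕ × Finset ℕ) : Prop := p.1 ⊆ q.1 ∧ q.2 ⊆ p.2

/-- Strict version of `pairLE`. -/
def pairLT (p q : Finset ℕ × Finset ℕ) : Prop := pairLE p q ∧ p ≠ q

/-- The generating relations of the equivalence `∼` on `𝒟`. -/
def PairRel (D : Set (Finset ℕ × Finset ℕ)) (p q : Finset ℕ × Finset ℕ) : Prop :=
  p ∈ D ∧ q ∈ D ∧ ((p.2 = q.2 ∧ p.1 ⊆ q.1) ∨ (p.1 = q.1 ∧ p.2 ⊆ q.2))

/-- The equivalence relation `∼` on separable pairs. -/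
def PairEquiv (D : Set (Finset ℕ × Finset ℕ)) :
    Finset ℕ × Finset ℕ → Finset ℕ × Finset ℕ → Prop :=
  Relation.EqvGen (PairRel D)

/-- A trivial separable pair. -/
def TrivialPair (n : ℕ) (ct : CType) (I J : Finset (Fin n)) (lbar : V n)
    (p : Finset ℕ × Finset ℕ) : Prop :=
  match ct with
  | CType.B | CType.C =>
    (∃ s0 : ℕ, 1 ≤ s0 ∧ s0 < mval n I ∧
       PairEquiv (DSet n ct I J lbar) p ({s0}, Finset.Icc 1 (mval n J))) ∨
    (∃ t0 : ℕ, 1 ≤ t0 ∧ t0 < mval n J ∧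
       PairEquiv (DSet n ct I J lbar) p (Finset.Icc 1 (mval n I), {t0}))
  | CType.D =>
    (∃ s0 : ℕ, 1 ≤ s0 ∧ s0 < mval n I ∧
       PairEquiv (DSet n ct I J lbar) p ({s0}, Finset.Icc 1 (mval n J - 1))) ∨
    (∃ t0 : ℕ, 1 ≤ t0 ∧ t0 < mval n J ∧
       PairEquiv (DSet n ct I J lbar) p (Finset.Icc 1 (mval n I - 1), {t0}))

/-- The set of blocks: equivalence classes of `^IW^Jλ̄` under `⟷`. -/
def BlockSet (n : ℕ) (ct : CType) (I : Finset (Fin n)) (lbar : V n) : Set (Set (V n)) :=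
  {Cl | ∃ lam ∈ IWJset n ct I lbar,
     Cl = {mu | mu ∈ IWJset n ct I lbar ∧ Conn n ct I lam mu}}

/-- The parity `P(λ)` of the number of negative entries of `λ`. -/
def Pfun (n : ℕ) (lam : V n) : ℕ :=
  (Finset.univ.filter (fun i : Fin n => lam i < 0)).card % 2

/-- A fundamental chain `c 1 ∼ c 2 ∼ … ∼ c k` in `𝒟`. -/
def IsFundChain (D : Set (Finset ℕ × Finset ℕ)) (c : ℕ → Finset ℕ × Finset ℕ)
    (k : ℕ) : Prop :=
  1 ≤ k ∧ (∀ i, 1 ≤ i → i ≤ k → c i ∈ D) ∧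
  (∀ i, 1 ≤ i → i < k →
     ((c i).1 = (c (i+1)).1 ∨ (c i).2 = (c (i+1)).2) ∧
     (pairLT (c i) (c (i+1)) ∨ pairLT (c (i+1)) (c i)))

/-- The list of parts of the partition `π_I`. -/
def piParts (n : ℕ) (ct : CType) (I : Finset (Fin n)) : List ℕ :=
  (List.range (mval n I - 1)).map (fun s => nsval n ct I (s+1)) ++
  (List.range (mval n I - 1)).map (fun s => nsval n ct I (s+1)) ++
  (match ct with
   | CType.B => [2 * nsval n ct I (mval n I) + 1]
   | CType.C => [2 * nsval n ct I (mval n I)]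
   | CType.D => if nsval n ct I (mval n I) = 0 then []
                else [2 * nsval n ct I (mval n I) - 1, 1])

/-- The `i`-th part (`1`-based) of the partition with list of parts `L`. -/
def partAt (L : List ℕ) (i : ℕ) : ℕ :=
  (L.mergeSort (fun a b => decide (b ≤ a))).getD (i - 1) 0

/-- The `i`-th part (`1`-based) of the dual partition `π^t`: the number of parts `≥ i`. -/
def dualAt (L : List ℕ) (i : ℕ) : ℕ :=
  (L.filter (fun x => decide (i ≤ x))).length

/-- `k` is compatible with the system `(Φ, Φ_I, Φ_J)`. -/
def CompatibleK (n : ℕ) (ct : CType) (I J : Finset (Fin n)) (k : ℕ) : Prop :=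
  1 ≤ k ∧ k ≤ 2 * mval n I - 1 ∧
  (match ct with
   | CType.B =>
     (Odd k ∧ k ≤ partAt (piParts n CType.B J) 2 ∧
        2 * nsval n CType.B J (mval n J) + 1 ≤ k ∧
        partAt (piParts n CType.B I) k ≤ 2 * nsval n CType.B I (mval n I) + 1) ∨
     (Even k ∧ k ≤ 2 * nsval n CType.B J (mval n J) ∧
        2 * nsval n CType.B I (mval n I) + 1 ≤ partAt (piParts n CType.B I) k)
   | CType.C =>
     (Odd k ∧ k ≤ partAt (piParts n CType.C J) 2 ∧
        2 * nsval n CType.C J (mval n J) + 1 ≤ k ∧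
        partAt (piParts n CType.C I) k ≤ 2 * nsval n CType.C I (mval n I)) ∨
     (Even k ∧ k ≤ 2 * nsval n CType.C J (mval n J) ∧
        2 * nsval n CType.C I (mval n I) + 1 ≤ partAt (piParts n CType.C I) k)
   | CType.D =>
     (Even k ∧ k ≤ partAt (piParts n CType.D J) 2 ∧
        2 * nsval n CType.D J (mval n J) ≤ k ∧
        2 * nsval n CType.D I (mval n I) ≤ partAt (piParts n CType.D I) k) ∨
     (Odd k ∧ k ≤ 2 * nsval n CType.D J (mval n J) - 1 ∧
        partAt (piParts n CType.D I) k ≤ 2 * nsval n CType.D I (mval n I) - 1))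

/-- `s_{e_{k_1}}^{ε_1} ⋯ s_{e_{k_r}}^{ε_r} μ`. -/
def applyFlips (n : ℕ) (ks : ℕ → Fin n) (eps : ℕ → Bool) : ℕ → V n → V n
  | 0, v => v
  | (r+1), v =>
      if eps (r+1) then sRefl (ee (ks (r+1))) (applyFlips n ks eps r v)
      else applyFlips n ks eps r v

end

lemma comb {n : ℕ} (M Mb S Sb : Finset ℕ) (σ τ τ' : Fin n → ℕ) (π : Equiv.Perm (Fin n))
    (hσ : ∀ i, σ i ∈ M) (hτ : ∀ i, τ i ∈ Mb) (hπ : ∀ i, τ' i = τ (π i))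
    (h1 : ∀ s ∈ S, ∀ t ∈ Sb, (Finset.univ.filter (fun i => σ i = s ∧ τ' i = t)).card ≤
      (Finset.univ.filter (fun i => σ i = s ∧ τ i = t)).card)
    (h0 : ∀ s ∈ M, s ∉ S → ∀ t ∈ Mb, t ∉ Sb →
      (Finset.univ.filter (fun i => σ i = s ∧ τ i = t)).card = 0) :
    (∀ s ∈ S, ∀ t ∈ Sb, (Finset.univ.filter (fun i => σ i = s ∧ τ' i = t)).card =
      (Finset.univ.filter (fun i => σ i = s ∧ τ i = t)).card) ∧
    (∀ s ∉ S, ∀ t ∉ Sb,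
      (Finset.univ.filter (fun i => σ i = s ∧ τ' i = t)).card = 0) := by
  have key : ∀ f : Fin n → ℕ, (Finset.univ.filter (fun i => σ i ∈ S ∧ f i ∈ Sb)).card =
      ∑ p ∈ S ×ˢ Sb, (Finset.univ.filter (fun i => σ i = p.1 ∧ f i = p.2)).card := by
    intro f
    rw [Finset.card_eq_sum_card_fiberwise (f := fun i => (σ i, f i)) (t := S ×ˢ Sb)]
    · apply Finset.sum_congr rfl
      rintro ⟨s, t⟩ hp
      rw [Finset.mem_product] at hp
      congr 1
      ext i
      simp only [Finset.mem_filter, Finset.mem_univ, true_and, Prod.mk.injEq]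
      constructor
      · rintro ⟨_, h⟩; exact h
      · rintro ⟨rfl, rfl⟩; exact ⟨hp, rfl, rfl⟩
    · intro i hi
      simpa using hi
  have split1 : ∀ f : Fin n → ℕ, (Finset.univ.filter (fun i => σ i ∈ S ∧ f i ∈ Sb)).card +
      (Finset.univ.filter (fun i => σ i ∈ S ∧ f i ∉ Sb)).card =
      (Finset.univ.filter (fun i => σ i ∈ S)).card := by
    intro f
    rw [← Finset.card_filter_add_card_filter_not (s := Finset.univ.filter (fun i => σ i ∈ S))
      (fun i => f i ∈ Sb), Finset.filter_filter, Finset.filter_filter]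
  have split2 : ∀ f : Fin n → ℕ, (Finset.univ.filter (fun i => σ i ∈ S ∧ f i ∉ Sb)).card +
      (Finset.univ.filter (fun i => σ i ∉ S ∧ f i ∉ Sb)).card =
      (Finset.univ.filter (fun i => f i ∉ Sb)).card := by
    intro f
    rw [← Finset.card_filter_add_card_filter_not (s := Finset.univ.filter (fun i => f i ∉ Sb))
      (fun i => σ i ∈ S), Finset.filter_filter, Finset.filter_filter]
    simp only [and_comm]
  have hperm : (Finset.univ.filter (fun i => τ' i ∉ Sb)).card =
      (Finset.univ.filter (fun i => τ i ∉ Sb)).card := by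
    apply Finset.card_equiv π
    intro i
    simp [hπ]
  have hD : (Finset.univ.filter (fun i => σ i ∉ S ∧ τ i ∉ Sb)).card = 0 := by
    rw [Finset.card_eq_zero, Finset.filter_eq_empty_iff]
    rintro i - ⟨hs, ht⟩
    have := h0 _ (hσ i) hs _ (hτ i) ht
    rw [Finset.card_eq_zero, Finset.filter_eq_empty_iff] at this
    exact this (Finset.mem_univ i) ⟨rfl, rfl⟩
  have hle : ∀ p ∈ S ×ˢ Sb, (Finset.univ.filter (fun i => σ i = p.1 ∧ τ' i = p.2)).card ≤
      (Finset.univ.filter (fun i => σ i = p.1 ∧ τ i = p.2)).card := by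
    intro p hp
    rw [Finset.mem_product] at hp
    exact h1 _ hp.1 _ hp.2
  have hsum := Finset.sum_le_sum hle
  have a1 := split1 τ
  have a2 := split1 τ'
  have b1 := split2 τ
  have b2 := split2 τ'
  rw [key] at a1 a2
  have hD' : (Finset.univ.filter (fun i => σ i ∉ S ∧ τ' i ∉ Sb)).card = 0 := by omega
  have heq : ∑ p ∈ S ×ˢ Sb, (Finset.univ.filter (fun i => σ i = p.1 ∧ τ' i = p.2)).card =
    ∑ p ∈ S ×ˢ Sb, (Finset.univ.filter (fun i => σ i = p.1 ∧ τ i = p.2)).card := by omega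
  rw [Finset.sum_eq_sum_iff_of_le hle] at heq
  constructor
  · intro s hs t ht
    exact heq (s, t) (Finset.mem_product.2 ⟨hs, ht⟩)
  · intro s hs t ht
    rw [Finset.card_eq_zero, Finset.filter_eq_empty_iff] at hD' ⊢
    rintro i - ⟨rfl, rfl⟩
    exact hD' (Finset.mem_univ i) ⟨hs, ht⟩

lemma inn_ee {n : ℕ} (x : V n) (i : Fin n) : inn x (ee i) = x i := by
  simp [inn, ee, Pi.single_apply]

lemma inn_add {n : ℕ} (x y z : V n) : inn x (y + z) = inn x y + inn x z := by
  simp [inn, mul_add, Finset.sum_add_distrib]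

lemma inn_sub {n : ℕ} (x y z : V n) : inn x (y - z) = inn x y - inn x z := by
  simp [inn, mul_sub, Finset.sum_sub_distrib]

lemma inn_neg {n : ℕ} (x y : V n) : inn x (-y) = - inn x y := by
  simp [inn]

lemma inn_smul {n : ℕ} (x y : V n) (c : ℝ) : inn x (c • y) = c * inn x y := by
  simp only [inn, Pi.smul_apply, smul_eq_mul, Finset.mul_sum]
  exact Finset.sum_congr rfl (fun _ _ => by ring)

lemma inn_comm {n : ℕ} (x y : V n) : inn x y = inn y x := by
  simp [inn, mul_comm]

lemma sRefl_invol {n : ℕ} (v x : V n) : sRefl v (sRefl v x) = x := by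
  unfold sRefl
  have e : inn (x - (2 * inn x v / inn v v) • v) v =
      inn x v - (2 * inn x v / inn v v) * inn v v := by
    rw [inn_comm, inn_sub, inn_smul, inn_comm v x]
  rw [e]
  by_cases h : inn v v = 0
  · simp [h]
  · have : (2 * inn x v / inn v v) * inn v v = 2 * inn x v := by field_simp
    rw [this]
    have : 2 * (inn x v - 2 * inn x v) / inn v v = - (2 * inn x v / inn v v) := by ring
    rw [this, neg_smul]
    abel

lemma worb_symm {n : ℕ} {ct : CType} {x y : V n} (h : WOrb n ct x y) : WOrb n ct y x := by
  unfold WOrb WIOrb at *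
  induction h with
  | refl => exact Relation.ReflTransGen.refl
  | tail _ hbc ih =>
    obtain ⟨i, hi, rfl⟩ := hbc
    exact Relation.ReflTransGen.head ⟨i, hi, (sRefl_invol _ _).symm⟩ ih

lemma refl_sub {n : ℕ} (x : V n) (i j k : Fin n) (h : i ≠ j) :
    |sRefl (ee i - ee j) x k| = |x (Equiv.swap i j k)| := by
  have e : sRefl (ee i - ee j) x k = x (Equiv.swap i j k) := by
    unfold sRefl
    simp only [inn_sub, inn_ee, Pi.sub_apply, Pi.smul_apply, smul_eq_mul]
    have hv : (ee i : V n) i - (ee j : V n) i - ((ee i : V n) j - (ee j : V n) j) = 2 := by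
      simp [ee, h, h.symm]; norm_num
    rw [hv]
    rcases eq_or_ne k i with rfl | hki
    · simp [ee, h]
    rcases eq_or_ne k j with rfl | hkj
    · simp [ee, hki]
    · rw [Equiv.swap_apply_of_ne_of_ne hki hkj]; simp [ee, hki, hkj]
  rw [e]

lemma refl_add {n : ℕ} (x : V n) (i j k : Fin n) :
    |sRefl (ee i + ee j) x k| = |x (Equiv.swap i j k)| := by
  by_cases h : i = j
  · subst h
    have : sRefl (ee i + ee i) x k = x k ∨ sRefl (ee i + ee i) x k = - x k := by
      unfold sRefl
      simp only [inn_add, inn_ee, Pi.add_apply, Pi.sub_apply, Pi.smul_apply, smul_eq_mul]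
      rcases eq_or_ne k i with rfl | hki
      · right; simp [ee]; ring
      · left; simp [ee, hki]
    rcases this with h | h <;> simp [h]
  · have e : sRefl (ee i + ee j) x k = x (Equiv.swap i j k) ∨
        sRefl (ee i + ee j) x k = - x (Equiv.swap i j k) := by
      unfold sRefl
      simp only [inn_add, inn_ee, Pi.add_apply, Pi.sub_apply, Pi.smul_apply, smul_eq_mul]
      have h' : j ≠ i := fun e => h e.symm
      have hv : (ee i : V n) i + (ee j : V n) i + ((ee i : V n) j + (ee j : V n) j) = 2 := by
        simp [ee, h, h']; norm_num
      rw [hv]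
      rcases eq_or_ne k i with rfl | hki
      · right; simp [ee, h]
      rcases eq_or_ne k j with rfl | hkj
      · right; simp [ee, hki]
      · left; rw [Equiv.swap_apply_of_ne_of_ne hki hkj]; simp [ee, hki, hkj]
    rcases e with h | h <;> simp [h]

lemma refl_smul {n : ℕ} (x : V n) (i k : Fin n) (c : ℝ) (hc : c ≠ 0) :
    |sRefl (c • ee i) x k| = |x k| := by
  have : sRefl (c • ee i) x k = x k ∨ sRefl (c • ee i) x k = - x k := by
    unfold sRefl
    simp only [inn_smul, inn_ee, Pi.sub_apply, Pi.smul_apply, smul_eq_mul]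
    rcases eq_or_ne k i with rfl | hki
    · right; simp [ee]; field_simp; ring
    · left; simp [ee, hki]
  rcases this with h | h <;> simp [h]

lemma refl_alpha {n : ℕ} (ct : CType) (i : Fin n) (x : V n) :
    ∃ π : Equiv.Perm (Fin n), ∀ k, |sRefl (alphaR n ct i) x k| = |x (π k)| := by
  unfold alphaR
  split_ifs with h
  · exact ⟨_, fun k => refl_sub x _ _ k (by simp [Fin.ext_iff])⟩
  · cases ct
    · refine ⟨1, fun k => ?_⟩
      have := refl_smul x i k 1 one_ne_zero
      simpa using this
    · exact ⟨1, fun k => refl_smul x i k 2 two_ne_zero⟩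
    · exact ⟨_, fun k => refl_add x _ _ k⟩

lemma worb_perm {n : ℕ} {ct : CType} {x y : V n} (h : WOrb n ct x y) :
    ∃ π : Equiv.Perm (Fin n), ∀ k, |y k| = |x (π k)| := by
  unfold WOrb WIOrb at *
  induction h with
  | refl => exact ⟨1, fun _ => rfl⟩
  | tail _ hbc ih =>
    obtain ⟨i, hi, rfl⟩ := hbc
    obtain ⟨π, hπ⟩ := ih
    obtain ⟨ρ, hρ⟩ := refl_alpha ct i _
    exact ⟨ρ.trans π, fun k => by rw [hρ, hπ]; rfl⟩

lemma inn_alpha_lt {n : ℕ} (ct : CType) (x : V n) (i : Fin n) (h : i.1 + 1 < n) :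
    inn x (alphaR n ct i) = x i - x ⟨i.1 + 1, h⟩ := by
  simp [alphaR, h, inn_sub, inn_ee]

lemma inn_alpha_last {n : ℕ} (ct : CType) (x : V n) (i : Fin n) (h : ¬ i.1 + 1 < n) :
    inn x (alphaR n ct i) = match ct with
      | CType.B => x i
      | CType.C => 2 * x i
      | CType.D => x ⟨n - 2, Nat.sub_lt i.pos (by norm_num)⟩ + x i := by
  cases ct <;> simp [alphaR, h, inn_add, inn_smul, inn_ee]

lemma span_inn {n : ℕ} {ct : CType} {I : Finset (Fin n)} {β : V n} (hβ : β ∈ PhiI n ct I)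
    (ω : V n) (hω : ∀ i ∈ I, inn ω (alphaR n ct i) = 0) : inn ω β = 0 := by
  have h := hβ.2
  simp only [SetLike.mem_coe] at h
  clear hβ
  induction h using Submodule.span_induction with
  | mem x hx => obtain ⟨i, hi, rfl⟩ := hx; exact hω i hi
  | zero => simp [inn]
  | add x y _ _ hx hy => rw [inn_add, hx, hy, add_zero]
  | smul a x _ hx => rw [inn_smul, hx, mul_zero]

/-- indicator of the first coordinates -/
def omg (n k : ℕ) : V n := fun i => if i.1 ≤ k then 1 else 0

lemma omg_span {n : ℕ} {ct : CType} {I : Finset (Fin n)} {β : V n} (hβ : β ∈ PhiI n ct I)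
    (k : Fin n) (hk : k ∉ I) (hD : ct = CType.D → k.1 + 2 ≠ n) : inn (omg n k.1) β = 0 := by
  apply span_inn hβ
  intro i hi
  have hne : i.1 ≠ k.1 := fun h => hk (by rwa [← Fin.ext h])
  have hk2 := k.2
  by_cases h : i.1 + 1 < n
  · rw [inn_alpha_lt ct _ i h]
    simp only [omg]
    split_ifs <;> first | omega | simp
  · rw [inn_alpha_last ct _ i h]
    have hi2 := i.2
    cases ct
    · simp only [omg]; split_ifs <;> first | omega | simp
    · simp only [omg]; split_ifs <;> first | omega | simp
    · have := hD rfl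
      simp only [omg]; split_ifs <;> first | omega | simp

lemma omg_span_D {n : ℕ} {I : Finset (Fin n)} {β : V n} (hβ : β ∈ PhiI n CType.D I)
    (k : Fin n) (hk : k ∉ I) (hD : k.1 + 2 = n) :
    inn (fun i : Fin n => if i.1 + 1 = n then (-1:ℝ) else 1) β = 0 := by
  apply span_inn hβ
  intro i hi
  have hne : i.1 ≠ k.1 := fun h => hk (by rwa [← Fin.ext h])
  by_cases h : i.1 + 1 < n
  · rw [inn_alpha_lt _ _ i h]
    dsimp only
    split_ifs <;> first | omega | simp
  · rw [inn_alpha_last _ _ i h]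
    have hi2 := i.2
    dsimp only
    split_ifs <;> first | omega | simp

lemma chain {n : ℕ} (r : ℝ → ℝ → Prop) (htr : ∀ a b c, r a b → r b c → r a c) (x : V n)
    (i : Fin n) (j : ℕ) : ∀ (hj : j < n), i.1 < j →
    (∀ k : Fin n, ∀ hk : k.1 + 1 < n, i.1 ≤ k.1 → k.1 < j → r (x ⟨k.1 + 1, hk⟩) (x k)) →
    r (x ⟨j, hj⟩) (x i) := by
  induction j with
  | zero => intro _ h; omega
  | succ j ih =>
    intro hj hij H
    have h1 := H ⟨j, by omega⟩ hj (by simp; omega) (by simp)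
    rcases Nat.lt_or_ge i.1 j with h | h
    · exact htr _ _ _ h1 (ih (by omega) h (fun k hk a b => H k hk a (by omega)))
    · have : i = ⟨j, by omega⟩ := Fin.ext (by simp; omega)
      rw [this]
      exact h1

lemma chain_lt {n : ℕ} {ct : CType} {I : Finset (Fin n)} {x : V n}
    (hx : ∀ i ∈ I, 0 < inn x (alphaR n ct i)) (i j : Fin n) (hij : i < j)
    (H : ∀ k : Fin n, i ≤ k → k < j → k ∈ I) : x j < x i := by
  apply chain (· < ·) (fun _ _ _ => lt_trans) x i j.1 j.2 hij
  intro k hk h1 h2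
  have := hx k (H k h1 h2)
  rw [inn_alpha_lt ct _ k hk] at this
  linarith

lemma pos_BC {n : ℕ} {ct : CType} (hct : ct ≠ CType.D) {I : Finset (Fin n)} {x : V n}
    (hx : ∀ i ∈ I, 0 < inn x (alphaR n ct i)) (i : Fin n)
    (H : ∀ k : Fin n, i ≤ k → k ∈ I) : 0 < x i := by
  have hi := i.2
  let l : Fin n := ⟨n - 1, by omega⟩
  have hil : i ≤ l := Fin.le_def.2 (by simp [l]; omega)
  have hl : 0 < x l := by
    have := hx l (H l hil)
    rw [inn_alpha_last ct _ l (by simp [l]; omega)] at this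
    cases ct
    · exact this
    · simpa using this
    · exact absurd rfl hct
  rcases eq_or_lt_of_le hil with h | h
  · rw [h]; exact hl
  · exact hl.trans (chain_lt hx i l h (fun k hk _ => H k hk))

/-- the span condition -/
def SpC (n : ℕ) (ct : CType) (I : Finset (Fin n)) (β : V n) : Prop :=
  (∀ k : Fin n, k ∉ I → (ct = CType.D → k.1 + 2 ≠ n) → inn (omg n k.1) β = 0) ∧
  (∀ k : Fin n, k ∉ I → ct = CType.D → k.1 + 2 = n →
    inn (fun i : Fin n => if i.1 + 1 = n then (-1:ℝ) else 1) β = 0)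

lemma spC_of {n : ℕ} {ct : CType} {I : Finset (Fin n)} {β : V n} (hβ : β ∈ PhiI n ct I) :
    SpC n ct I β := by
  refine ⟨fun k hk h => omg_span hβ k hk h, ?_⟩
  rintro k hk rfl h
  exact omg_span_D hβ k hk h

lemma spC_neg {n : ℕ} {ct : CType} {I : Finset (Fin n)} {β : V n} (h : SpC n ct I (-β)) :
    SpC n ct I β := by
  refine ⟨fun k h1 h2 => ?_, fun k h1 h2 h3 => ?_⟩
  · have := h.1 k h1 h2; rw [inn_neg] at this; linarith
  · have := h.2 k h1 h2 h3; rw [inn_neg] at this; linarith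

lemma reg_minus {n : ℕ} {ct : CType} {I : Finset (Fin n)} {x : V n}
    (hx : ∀ i ∈ I, 0 < inn x (alphaR n ct i)) (i j : Fin n) (hij : i < j)
    (h : SpC n ct I (ee i - ee j)) : x j < x i := by
  apply chain_lt hx i j hij
  intro k h1 h2
  by_contra hk
  rw [Fin.le_def] at h1
  rw [Fin.lt_def] at h2 hij
  have hj := j.2
  by_cases hD : ct = CType.D ∧ k.1 + 2 = n
  · have := h.2 k hk hD.1 hD.2
    simp only [inn_sub, inn_ee] at this
    rw [if_neg (by omega), if_pos (by omega)] at this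
    norm_num at this
  · have := h.1 k hk (fun a b => hD ⟨a, b⟩)
    simp only [inn_sub, inn_ee, omg] at this
    rw [if_pos h1, if_neg (by omega)] at this
    norm_num at this

lemma reg_plus {n : ℕ} {ct : CType} {I : Finset (Fin n)} {x : V n}
    (hx : ∀ i ∈ I, 0 < inn x (alphaR n ct i)) (i j : Fin n) (hij : i < j)
    (h : SpC n ct I (ee i + ee j)) : 0 < x i + x j := by
  have A : ∀ k : Fin n, i ≤ k → (ct = CType.D → k.1 + 2 ≠ n) → k ∈ I := by
    intro k h1 h2
    by_contra hk
    rw [Fin.le_def] at h1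
    have := h.1 k hk h2
    simp only [inn_add, inn_ee, omg] at this
    rw [if_pos h1] at this
    split_ifs at this <;> norm_num at this
  have hj := j.2
  rw [Fin.lt_def] at hij
  by_cases hD : ct = CType.D
  · subst hD
    let p : Fin n := ⟨n - 2, by omega⟩
    let l : Fin n := ⟨n - 1, by omega⟩
    have hlp : 0 < x p + x l := by
      have := hx l (A l (Fin.le_def.2 (by simp [l]; omega)) (by intro; simp [l]; omega))
      rwa [inn_alpha_last _ _ l (by simp [l]; omega)] at this
    have hip : x p ≤ x i := by
      rcases eq_or_lt_of_le (show i ≤ p from Fin.le_def.2 (by simp [p]; omega)) with h | h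
      · rw [h]
      · exact (chain_lt hx i p h (fun k h1 h2 => A k h1 (by
          intro; simp [Fin.lt_def, p] at h2; omega))).le
    by_cases hjl : j = l
    · rw [hjl]; linarith
    · have hjl' : j.1 ≠ n - 1 := fun h => hjl (Fin.ext h)
      have hp : p ∈ I := by
        by_contra hk
        have := h.2 p hk rfl (by simp [p]; omega)
        simp only [inn_add, inn_ee] at this
        rw [if_neg (by omega), if_neg (by omega)] at this
        norm_num at this
      have hpl : x l < x p := by
        apply chain_lt hx p l (Fin.lt_def.2 (by simp [p, l]; omega))
        intro k h1 h2
        have : k = p := Fin.ext (by simp [Fin.lt_def, Fin.le_def, p, l] at h1 h2 ⊢; omega)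
        rwa [this]
      have hjp : x p ≤ x j := by
        rcases eq_or_lt_of_le (show j ≤ p from Fin.le_def.2 (by simp [p]; omega)) with h | h
        · rw [h]
        · exact (chain_lt hx j p h (fun k h1 h2 => A k (le_trans (Fin.le_def.2 hij.le) h1) (by
            intro; simp [Fin.lt_def, p] at h2; omega))).le
      linarith
  · have h1 := pos_BC hD hx i (fun k hk => A k hk (fun h => absurd h hD))
    have h2 := pos_BC hD hx j (fun k hk => A k (le_trans (Fin.le_def.2 hij.le) hk)
      (fun h => absurd h hD))
    linarith

lemma reg_single {n : ℕ} {ct : CType} (hD : ct ≠ CType.D) {I : Finset (Fin n)} {x : V n}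
    (hx : ∀ i ∈ I, 0 < inn x (alphaR n ct i)) (i : Fin n) (c : ℝ) (hc : c ≠ 0)
    (h : SpC n ct I (c • ee i)) : 0 < x i := by
  apply pos_BC hD hx i
  intro k h1
  by_contra hk
  rw [Fin.le_def] at h1
  have := h.1 k hk (fun h => absurd h hD)
  simp only [inn_smul, inn_ee, omg] at this
  rw [if_pos h1] at this
  apply hc
  linarith

lemma reg_D {n : ℕ} {ct : CType} {I : Finset (Fin n)} {x : V n}
    (hx : ∀ i ∈ I, 0 < inn x (alphaR n ct i)) (β : V n) (hβ : β ∈ DRoots n)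
    (h : SpC n ct I β) : inn x β ≠ 0 := by
  obtain ⟨i, j, hij, hb⟩ := hβ
  rcases hb with rfl | rfl | rfl
  · rw [inn_add, inn_ee, inn_ee]
    rcases lt_or_gt_of_ne hij with hl | hl
    · have := reg_plus hx i j hl h; linarith
    · have := reg_plus hx j i hl (by rwa [add_comm]); linarith
  · rw [inn_sub, inn_ee, inn_ee]
    rcases lt_or_gt_of_ne hij with hl | hl
    · have := reg_minus hx i j hl h; intro; linarith
    · have := reg_minus hx j i hl (spC_neg (by rwa [neg_sub])); intro; linarith
  · have h : SpC n ct I (ee i + ee j) := spC_neg (by rwa [neg_add'])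
    rw [inn_sub, inn_neg, inn_ee, inn_ee]
    rcases lt_or_gt_of_ne hij with hl | hl
    · have := reg_plus hx i j hl h; intro; linarith
    · have := reg_plus hx j i hl (by rwa [add_comm]); intro; linarith

lemma reg_of_pos {n : ℕ} {ct : CType} {I : Finset (Fin n)} {x : V n}
    (hx : ∀ i ∈ I, 0 < inn x (alphaR n ct i)) : RegI n ct I x := by
  intro β hβ
  have h := spC_of hβ
  have hp := hβ.1
  cases ct
  · rcases hp with hp | ⟨i, rfl | rfl⟩
    · exact reg_D hx β hp h
    · have := reg_single (by simp) hx i 1 one_ne_zero (by simpa using h)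
      rw [inn_ee]; exact this.ne'
    · have := reg_single (by simp) hx i 1 one_ne_zero (by simpa using spC_neg h)
      rw [inn_neg, inn_ee]; intro; linarith
  · rcases hp with hp | ⟨i, rfl | rfl⟩
    · exact reg_D hx β hp h
    · have := reg_single (by simp) hx i 2 two_ne_zero h
      rw [inn_smul, inn_ee]; intro; linarith
    · have := reg_single (by simp) hx i 2 two_ne_zero (spC_neg h)
      rw [inn_neg, inn_smul, inn_ee]; intro; linarith
  · exact reg_D hx β hp h

lemma qval_idx {n : ℕ} (I : Finset (Fin n)) (s : ℕ) (h1 : 1 ≤ s) (h2 : s < mval n I) :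
    ∃ k : Fin n, k ∉ I ∧ qval n I s = k.1 + 1 := by
  have hl : s - 1 < ((Finset.univ \ I).sort (· ≤ ·)).length := by
    simp only [mval, Qlist, List.length_map] at h2; omega
  refine ⟨((Finset.univ \ I).sort (· ≤ ·))[s-1], ?_, ?_⟩
  · have := List.getElem_mem hl
    rw [Finset.mem_sort] at this
    simpa using this
  · rw [qval, if_neg (by omega), if_pos h2, List.getD_eq_getElem _ _ (by simpa [Qlist] using hl)]
    simp [Qlist]

lemma qval_lt {n : ℕ} (I : Finset (Fin n)) (s s' : ℕ) (h1 : 1 ≤ s) (hs : s < s')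
    (h2 : s' < mval n I) : qval n I s < qval n I s' := by
  have hl' : s' - 1 < ((Finset.univ \ I).sort (· ≤ ·)).length := by
    simp only [mval, Qlist, List.length_map] at h2; omega
  have hl : s - 1 < ((Finset.univ \ I).sort (· ≤ ·)).length := by omega
  rw [qval, if_neg (by omega), if_pos (by omega), List.getD_eq_getElem _ _ (by simpa [Qlist] using hl),
    qval, if_neg (by omega), if_pos h2, List.getD_eq_getElem _ _ (by simpa [Qlist] using hl')]
  have := (Finset.sortedLT_sort (Finset.univ \ I)).strictMono_get
    (show (⟨s - 1, hl⟩ : Fin _) < ⟨s' - 1, hl'⟩ from Fin.lt_def.2 (by simp; omega))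
  simpa [Qlist] using this

lemma qval_surj {n : ℕ} (I : Finset (Fin n)) (k : Fin n) (hk : k ∉ I) :
    ∃ s, 1 ≤ s ∧ s < mval n I ∧ qval n I s = k.1 + 1 := by
  have : k ∈ (Finset.univ \ I).sort (· ≤ ·) := by rw [Finset.mem_sort]; simpa using hk
  obtain ⟨r, hr, hrk⟩ := List.getElem_of_mem this
  have hm : r + 1 < mval n I := by simp only [mval, Qlist, List.length_map]; omega
  refine ⟨r + 1, by omega, hm, ?_⟩
  rw [qval, if_neg (by omega), if_pos hm, List.getD_eq_getElem _ _ (by simpa [Qlist] using hr)]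
  simp [Qlist, hrk]

lemma qval_le {n : ℕ} (I : Finset (Fin n)) (s : ℕ) : qval n I s ≤ n := by
  by_cases h0 : s = 0
  · simp [qval, h0]
  by_cases h : s < mval n I
  · obtain ⟨k, _, hk⟩ := qval_idx I s (by omega) h
    have := k.2; omega
  · simp [qval, h0, h]

lemma qval_mono {n : ℕ} (I : Finset (Fin n)) (s s' : ℕ) (hs : s ≤ s') :
    qval n I s ≤ qval n I s' := by
  by_cases h0 : s = 0
  · simp [qval, h0]
  by_cases h : s' < mval n I
  · rcases eq_or_lt_of_le hs with rfl | hs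
    · rfl
    · exact (qval_lt I s s' (by omega) hs h).le
  · have : qval n I s' = n := by simp [qval, h, show s' ≠ 0 by omega]
    rw [this]; exact qval_le I s

lemma nonstd_mval {n : ℕ} {ct : CType} {I : Finset (Fin n)} (h : ¬ StandardI n ct I) :
    2 ≤ mval n I ∧ ct = CType.D ∧ ∃ h2 : 2 ≤ n,
      ((⟨n - 2, by omega⟩ : Fin n) ∉ I ∧ (⟨n - 1, by omega⟩ : Fin n) ∈ I) := by
  unfold StandardI at h
  push Not at h
  obtain ⟨h1, h2, h3, h4⟩ := h
  obtain ⟨s, hs, hs', _⟩ := qval_surj I _ h3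
  exact ⟨by omega, h1, h2, h3, h4⟩

lemma mval_pos {n : ℕ} (I : Finset (Fin n)) : 1 ≤ mval n I := by simp [mval]

lemma qv_zero {n : ℕ} (ct : CType) (I : Finset (Fin n)) : qv n ct I 0 = 0 := by
  unfold qv
  rw [if_neg]
  · simp [qval]
  · rintro ⟨h, h'⟩
    have := (nonstd_mval h).1
    omega

lemma qv_m {n : ℕ} (ct : CType) (I : Finset (Fin n)) : qv n ct I (mval n I) = n := by
  have := mval_pos I
  unfold qv
  rw [if_neg (by omega)]
  simp [qval]; omega

lemma qv_mono {n : ℕ} (ct : CType) (I : Finset (Fin n)) (s s' : ℕ) (hs : s ≤ s') :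
    qv n ct I s ≤ qv n ct I s' := by
  unfold qv
  split_ifs with h1 h2 h2
  · rfl
  · have : qval n I s' = n := by
      have := mval_pos I
      have h3 : s' ≠ mval n I - 1 := fun h => h2 ⟨h1.1, h⟩
      simp only [qval]
      rw [if_neg (by omega), if_neg (by omega)]
    rw [this]
  · exact qval_le I s
  · exact qval_mono I s s' hs

lemma seg_exists {n : ℕ} (ct : CType) (I : Finset (Fin n)) (i : Fin n) :
    ∃ s ∈ Finset.Icc 1 (mval n I), ∀ t ∈ Finset.Icc 1 (mval n I), InSeg n ct I t i ↔ s = t := by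
  have hex : ∃ s, i.1 + 1 ≤ qv n ct I s := ⟨mval n I, by rw [qv_m]; exact i.2⟩
  have h1 := Nat.find_spec hex
  have h2 : ∀ r < Nat.find hex, qv n ct I r < i.1 + 1 := fun r hr => not_le.1 (Nat.find_min hex hr)
  have hm : Nat.find hex ≤ mval n I := Nat.find_min' hex (by rw [qv_m]; exact i.2)
  have h0 : 1 ≤ Nat.find hex := by
    by_contra h
    have h : Nat.find hex = 0 := by omega
    rw [h, qv_zero] at h1
    omega
  refine ⟨Nat.find hex, Finset.mem_Icc.2 ⟨h0, hm⟩, ?_⟩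
  intro t ht
  rw [Finset.mem_Icc] at ht
  constructor
  · rintro ⟨ha, hb⟩
    apply le_antisymm (Nat.find_min' hex hb)
    by_contra hlt
    have := qv_mono ct I (Nat.find hex) (t - 1) (by omega)
    omega
  · intro h
    rw [h] at h1 h2
    exact ⟨h2 _ (by omega), h1⟩

section vals
variable {n : ℕ} {ct : CType} {J : Finset (Fin n)} {lbar : V n}

lemma std_J (hdom : DominantW n ct lbar)
    (hJ : ∀ i : Fin n, i ∈ J ↔ inn lbar (alphaR n ct i) = 0)
    (hA : 0 < aval n ct J lbar (mval n J - 1)) : StandardI n ct J := by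
  by_contra h
  obtain ⟨hm, rfl, hn, h1, h2⟩ := nonstd_mval h
  have e : aval n CType.D J lbar (mval n J - 1) = lbar ⟨n - 1, by omega⟩ := by
    have : qv n CType.D J (mval n J - 1) = n := by simp [qv, h]
    simp only [aval, this]
    rw [if_pos (by omega), dif_pos (by omega)]
  rw [e] at hA
  rw [hJ, inn_alpha_last _ _ _ (by simp; omega)] at h2
  have h3 := hdom ⟨n - 2, by omega⟩
  rw [inn_alpha_lt _ _ _ (by simp; omega)] at h3
  simp only [show n - 2 + 1 = n - 1 by omega] at h3
  simp only at h2
  linarith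

lemma aval_idx (hst : StandardI n ct J) (t : ℕ) (h1 : 1 ≤ t) (h2 : t < mval n J) (k : Fin n)
    (hk : qval n J t = k.1 + 1) : aval n ct J lbar t = lbar k := by
  have : qv n ct J t = k.1 + 1 := by simp [qv, hst, hk]
  simp only [aval, this]
  rw [if_pos h2, dif_pos (by have := k.2; omega)]
  rfl

lemma dom_le (hdom : DominantW n ct lbar) (i j : Fin n) (hij : i ≤ j) : lbar j ≤ lbar i := by
  rcases eq_or_lt_of_le hij with rfl | h
  · rfl
  · apply chain (· ≤ ·) (fun _ _ _ => le_trans) lbar i j.1 j.2 h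
    intro k hk _ _
    have := hdom k
    rw [inn_alpha_lt _ _ _ hk] at this
    linarith

lemma aval_lt (hdom : DominantW n ct lbar)
    (hJ : ∀ i : Fin n, i ∈ J ↔ inn lbar (alphaR n ct i) = 0)
    (hA : 0 < aval n ct J lbar (mval n J - 1)) (t t' : ℕ) (h1 : 1 ≤ t) (h : t < t')
    (h2 : t' ≤ mval n J) : aval n ct J lbar t' < aval n ct J lbar t := by
  have hst := std_J hdom hJ hA
  have main : ∀ t t', 1 ≤ t → t < t' → t' < mval n J →
      aval n ct J lbar t' < aval n ct J lbar t := by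
    intro t t' h1 h h2
    obtain ⟨k, hk, e⟩ := qval_idx J t h1 (by omega)
    obtain ⟨k', hk', e'⟩ := qval_idx J t' (by omega) h2
    rw [aval_idx hst t h1 (by omega) k e, aval_idx hst t' (by omega) h2 k' e']
    have hlt := qval_lt J t t' h1 h h2
    have hk'2 := k'.2
    have hkn : k.1 + 1 < n := by omega
    have a := hdom k
    have b : inn lbar (alphaR n ct k) ≠ 0 := fun h => hk ((hJ k).2 h)
    have c := lt_of_le_of_ne a b.symm
    rw [inn_alpha_lt _ _ _ hkn] at c
    have d := dom_le hdom ⟨k.1 + 1, hkn⟩ k' (Fin.le_def.2 (by simp; omega))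
    linarith
  rcases eq_or_lt_of_le h2 with rfl | h2
  · have e : aval n ct J lbar (mval n J) = 0 := by simp [aval]
    rw [e]
    rcases eq_or_lt_of_le (show t ≤ mval n J - 1 by omega) with h' | h'
    · rwa [h']
    · exact hA.trans (main _ _ h1 h' (by omega))
  · exact main _ _ h1 h h2

lemma cover (hdom : DominantW n ct lbar)
    (hJ : ∀ i : Fin n, i ∈ J ↔ inn lbar (alphaR n ct i) = 0)
    (hA : 0 < aval n ct J lbar (mval n J - 1)) (i : Fin n) :
    ∃ t ∈ Finset.Icc 1 (mval n J), aval n ct J lbar t = |lbar i| := by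
  have hst := std_J hdom hJ hA
  have hm := mval_pos J
  have e0 : aval n ct J lbar (mval n J) = 0 := by simp [aval]
  have ch : ∀ j : Fin n, i ≤ j → (∀ k : Fin n, i ≤ k → k < j → k ∈ J) → lbar j = lbar i := by
    intro j hij H
    rcases eq_or_lt_of_le hij with rfl | h
    · rfl
    · apply chain (· = ·) (fun _ _ _ => Eq.trans) lbar i j.1 j.2 h
      intro k hk h1 h2
      have := (hJ k).1 (H k h1 h2)
      rw [inn_alpha_lt _ _ _ hk] at this
      linarith
  by_cases hex : ∃ j : Fin n, i ≤ j ∧ j ∉ J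
  · obtain ⟨j, ⟨hij, hjJ⟩, hmin⟩ := WellFounded.has_min (wellFounded_lt (α := Fin n))
      {j : Fin n | i ≤ j ∧ j ∉ J} hex
    have e := ch j hij (fun k h1 h2 => by
      by_contra h3
      exact hmin k ⟨h1, h3⟩ h2)
    obtain ⟨t, h1, h2, h3⟩ := qval_surj J j hjJ
    refine ⟨t, Finset.mem_Icc.2 ⟨h1, h2.le⟩, ?_⟩
    have a := aval_lt hdom hJ hA t _ h1 h2 le_rfl
    rw [e0] at a
    have b := aval_idx (lbar := lbar) hst t h1 h2 j h3
    rw [b] at a ⊢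
    rw [← e, abs_of_pos a]
  · push Not at hex
    have hi := i.2
    refine ⟨mval n J, Finset.mem_Icc.2 ⟨hm, le_rfl⟩, ?_⟩
    rw [e0]
    let l : Fin n := ⟨n - 1, by omega⟩
    have hil : i ≤ l := Fin.le_def.2 (by simp [l]; omega)
    have e := ch l hil (fun k h _ => hex k h)
    have hl := (hJ l).1 (hex l hil)
    rw [inn_alpha_last _ _ l (by simp [l]; omega)] at hl
    have hl0 : lbar l = 0 := by
      cases ct
      · exact hl
      · simpa using hl
      · simp only at hl
        by_cases hn : 2 ≤ n
        · have hp := (hst rfl hn).resolve_right (fun h => h (hex l hil))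
          rw [hJ, inn_alpha_lt _ _ _ (by simp; omega)] at hp
          simp only [show n - 2 + 1 = n - 1 by omega] at hp
          change _ - lbar l = 0 at hp
          linarith
        · have : (⟨n - 2, by omega⟩ : Fin n) = l := Fin.ext (by simp [l]; omega)
          rw [this] at hl
          linarith
    rw [← e, hl0, abs_zero]

lemma val_exists (hdom : DominantW n ct lbar)
    (hJ : ∀ i : Fin n, i ∈ J ↔ inn lbar (alphaR n ct i) = 0)
    (hA : 0 < aval n ct J lbar (mval n J - 1)) (i : Fin n) :
    ∃ s ∈ Finset.Icc 1 (mval n J), ∀ t ∈ Finset.Icc 1 (mval n J),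
      |lbar i| = aval n ct J lbar t ↔ s = t := by
  obtain ⟨s, hs, e⟩ := cover hdom hJ hA i
  refine ⟨s, hs, fun t ht => ?_⟩
  rw [← e]
  constructor
  · intro h
    rw [Finset.mem_Icc] at hs ht
    rcases lt_trichotomy s t with h' | h' | h'
    · exact absurd h (aval_lt hdom hJ hA s t hs.1 h' ht.2).ne'
    · exact h'
    · exact absurd h (aval_lt hdom hJ hA t s ht.1 h' hs.2).ne
  · rintro rfl; rfl

end vals

/-- Lemma 5.4 / `sslem1`. -/
theorem statement7 (n : ℕ) (ct : CType) (I J : Finset (Fin n)) (lam lbar : V n)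
    (hint : IntegralW n ct lam) (hreg : RegI n ct I lam)
    (horb : WOrb n ct lam lbar) (hdom : DominantW n ct lbar)
    (hJ : ∀ i : Fin n, i ∈ J ↔ inn lbar (alphaR n ct i) = 0)
    (hA : 0 < aval n ct J lbar (mval n J - 1))
    (S Sb : Finset ℕ) (hsep : IsSepPair n ct I J lbar lam S Sb) :
    ∀ mu ∈ IWJset n ct I lbar, IsSepPair n ct I J lbar mu S Sb := by
  choose σ hσ hσ' using seg_exists ct I
  choose τ hτ hτ' using val_exists hdom hJ hA
  rintro mu ⟨hmo, hmI⟩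
  have hmreg : RegI n ct I mu := reg_of_pos hmI.2
  have hlm : WOrb n ct lam mu := Relation.ReflTransGen.trans horb hmo
  obtain ⟨p, hp⟩ := worb_perm (worb_symm horb)
  obtain ⟨q, hq⟩ := worb_perm hmo
  obtain ⟨hS, hSb, hSs, hSbs, hm, hmb, hmax, hzero, htype⟩ := hsep
  have nsl_eq : ∀ (x : V n) (r : Equiv.Perm (Fin n)), (∀ k, |x k| = |lbar (r k)|) →
      ∀ s ∈ Finset.Icc 1 (mval n I), ∀ t ∈ Finset.Icc 1 (mval n J),
      nsl n ct I x s (aval n ct J lbar t) =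
        (Finset.univ.filter (fun i => σ i = s ∧ τ (r i) = t)).card := by
    intro x r hr s hs t ht
    unfold nsl
    congr 1
    ext i
    simp only [Finset.mem_filter, Finset.mem_univ, true_and]
    rw [hσ' i s hs, hr, hτ' (r i) t ht]
  have hc := comb (Finset.Icc 1 (mval n I)) (Finset.Icc 1 (mval n J)) S Sb σ (fun i => τ (p i))
    (fun i => τ (q i)) (q.trans p.symm) hσ (fun i => hτ _) (fun i => by simp)
    (by
      intro s hs t ht
      have := hmax s hs t ht mu hlm hmreg
      rwa [nsl_eq mu q hq s (hSs hs) t (hSbs ht), nsl_eq lam p hp s (hSs hs) t (hSbs ht)] at this)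
    (by
      intro s hs hs' t ht ht'
      have := hzero s hs hs' t ht ht'
      rwa [nsl_eq lam p hp s hs t ht] at this)
  refine ⟨hS, hSb, hSs, hSbs, hm, hmb, ?_, ?_, htype⟩
  · intro s hs t ht nu hnu hnr
    have h1 := hmax s hs t ht nu (Relation.ReflTransGen.trans hlm hnu) hnr
    have h2 := hc.1 s hs t ht
    rw [← nsl_eq mu q hq s (hSs hs) t (hSbs ht), ← nsl_eq lam p hp s (hSs hs) t (hSbs ht)] at h2
    omega
  · intro s hs hs' t ht ht'
    rw [nsl_eq mu q hq s hs t ht]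
    exact hc.2 s hs' t ht'

end JantzenBlocks
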